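/- For p ∈ [1 - q/(d+1), 1) ∩ (0,1), integers d ≥ 1, 1 ≤ m ≤ q-1, x = 1 is the unique solution on [1,∞) of (f_m ∘ f_m)'(x) = (d(1-p)/(p+q-1))², where f_m(x) = ((B + (m-1+p)(x-1))/(B + m(x-1)))^d and B = p+q-1. -/

import Mathlib

/-! Put `F_a(x) = (B + a(x-1)) / (B + m(x-1))`, so that `f = F_a ^ d` with `a = m - 1 + p`. Since
`F_a' = ((a - m) / B) F_0²`, the chain rule gives, with `y = f x`,
`(f ∘ f)'(x) = (d(m-a)/B)² (F_a(x) F_a(y))^(d-1) (F_0(x) F_0(y))²`,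
and every factor after the first is `1` at `x = 1`. For `x > 1`, weighted AM-GM shows that their
product is less than `1` once `(d-1) F_a(x) F_a(y) + 2 F_0(x) F_0(y) < d + 1`. In the coordinate
`s = (x-1) / (B + m(x-1))` one has `F_a(x) = 1 - (m-a)s`, and this inequality follows from
`d(m-a) ≤ B` together with a Padé-type sharpening of Bernoulli's inequality for `(1-t)^d`,
`t = (m-a)s`. -/

section Inequalities

variable {t : ℝ}

lemma one_sub_pow_mul_one_add_mul_le_one (ht0 : 0 ≤ t) (ht1 : t ≤ 1) (n : ℕ) :
    (1 - t) ^ n * (1 + n * t) ≤ 1 :=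
  calc (1 - t) ^ n * (1 + n * t) ≤ (1 - t) ^ n * (1 + t) ^ n :=
        mul_le_mul_of_nonneg_left (one_add_mul_le_pow (by linarith) n)
          (pow_nonneg (sub_nonneg.2 ht1) n)
    _ = (1 - t ^ 2) ^ n := by rw [← mul_pow]; ring
    _ ≤ 1 := pow_le_one₀ (sub_nonneg.2 (pow_le_one₀ ht0 ht1)) (by linarith [sq_nonneg t])

lemma two_sub_add_one_mul_le_one_sub_pow_mul (ht0 : 0 ≤ t) (ht1 : t ≤ 1) (n : ℕ) :
    2 - (n + 1) * t ≤ (1 - t) ^ n * (2 + (n - 1) * t) := by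
  induction n with
  | zero => norm_num
  | succ n ih =>
    -- The difference of the two sides grows by `t * (1 - (1 - t) ^ n * (1 + n * t))`.
    have increment :=
      mul_nonneg ht0 (sub_nonneg.2 (one_sub_pow_mul_one_add_mul_le_one ht0 ht1 n))
    rw [pow_succ]
    push_cast
    linear_combination ih + increment

lemma pow_mul_pow_lt_one_of_weighted_sum_lt {a b : ℝ} {k l : ℕ} (ha : 0 ≤ a) (hb : 0 ≤ b)
    (h : k * a + l * b < k + l) : a ^ k * b ^ l < 1 := by
  have le_exp (z : ℝ) : z ≤ Real.exp (z - 1) := by linarith [Real.add_one_le_exp (z - 1)]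
  calc a ^ k * b ^ l ≤ Real.exp (a - 1) ^ k * Real.exp (b - 1) ^ l := by
        gcongr <;> exact le_exp _
    _ = Real.exp (k * (a - 1) + l * (b - 1)) := by
        rw [Real.exp_add, Real.exp_nat_mul, Real.exp_nat_mul]
    _ < 1 := Real.exp_lt_one_iff.2 (by linarith)

end Inequalities

/-- The Möbius map fixing `1` with numerator slope `a` and denominator slope `m`. The numerator
slope `0` is allowed, since the derivative is expressed through that case. -/
noncomputable def mobiusRatio (B m a x : ℝ) : ℝ := (B + a * (x - 1)) / (B + m * (x - 1))

/-- The map `f_m` of the theorem, where `a` stands for `m - 1 + p`. -/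
noncomputable def mobiusPow (d : ℕ) (B m a x : ℝ) : ℝ := mobiusRatio B m a x ^ d

/-- The Möbius coordinate vanishing at `1` in which every `mobiusRatio B m a` is affine. -/
noncomputable def mobiusCoord (B m x : ℝ) : ℝ := (x - 1) / (B + m * (x - 1))

section Mobius

variable {d : ℕ} {B m a x s : ℝ}

lemma mobiusRatio_one (hB : B ≠ 0) : mobiusRatio B m a 1 = 1 := by
  simp [mobiusRatio, hB]

lemma mobiusPow_one (hB : B ≠ 0) : mobiusPow d B m a 1 = 1 := by
  rw [mobiusPow, mobiusRatio_one hB, one_pow]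

lemma mobiusRatio_eq_one_sub (hx : B + m * (x - 1) ≠ 0) :
    mobiusRatio B m a x = 1 - (m - a) * mobiusCoord B m x := by
  rw [mobiusRatio, mobiusCoord, eq_sub_iff_add_eq, mul_div_assoc', ← add_div, div_eq_one_iff_eq hx]
  ring

lemma mobiusRatio_nonneg (hB : 0 ≤ B) (ha : 0 ≤ a) (ham : a ≤ m) (hx : 0 ≤ B + m * (x - 1)) :
    0 ≤ mobiusRatio B m a x := by
  refine div_nonneg ?_ hx
  rcases le_total 1 x with h | h
  · have := mul_nonneg ha (sub_nonneg.2 h)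
    linarith
  · have := mul_le_mul_of_nonpos_right ham (sub_nonpos.2 h)
    linarith

lemma hasDerivAt_mobiusRatio (hB : B ≠ 0) (hx : B + m * (x - 1) ≠ 0) :
    HasDerivAt (mobiusRatio B m a) ((a - m) / B * mobiusRatio B m 0 x ^ 2) x := by
  have affine (k : ℝ) : HasDerivAt (fun z ↦ B + k * (z - 1)) k x := by
    simpa using (((hasDerivAt_id x).sub_const 1).const_mul k).const_add B
  refine ((affine a).fun_div (affine m) hx).congr_deriv ?_
  rw [mobiusRatio]
  field_simp
  ring

lemma hasDerivAt_mobiusPow (hB : B ≠ 0) (hx : B + m * (x - 1) ≠ 0) :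
    HasDerivAt (mobiusPow d B m a)
      (-(d * (m - a) / B) * (mobiusRatio B m a x ^ (d - 1) * mobiusRatio B m 0 x ^ 2)) x :=
  ((hasDerivAt_mobiusRatio hB hx).fun_pow d).congr_deriv (by ring)

lemma deriv_mobiusPow_comp_self (hB : B ≠ 0) (hx : B + m * (x - 1) ≠ 0)
    (hy : B + m * (mobiusPow d B m a x - 1) ≠ 0) :
    deriv (mobiusPow d B m a ∘ mobiusPow d B m a) x = (d * (m - a) / B) ^ 2 *
      ((mobiusRatio B m a x * mobiusRatio B m a (mobiusPow d B m a x)) ^ (d - 1) *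
        (mobiusRatio B m 0 x * mobiusRatio B m 0 (mobiusPow d B m a x)) ^ 2) := by
  rw [((hasDerivAt_mobiusPow hB hy).comp x (hasDerivAt_mobiusPow hB hx)).deriv]
  ring

lemma deriv_mobiusPow_comp_self_one (hB : B ≠ 0) :
    deriv (mobiusPow d B m a ∘ mobiusPow d B m a) 1 = (d * (m - a) / B) ^ 2 := by
  rw [deriv_mobiusPow_comp_self hB] <;> simp [mobiusPow_one, mobiusRatio_one, hB]

lemma add_mul_one_sub_pow_sub_one_pos (hd : 1 ≤ d) (ha : 0 ≤ a) (ham : a < m)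
    (hdB : d * (m - a) ≤ B) (hs : 0 ≤ s) (hms : m * s < 1) :
    0 < B + m * ((1 - (m - a) * s) ^ d - 1) := by
  have bernoulli : 1 + d * (1 - (m - a) * s - 1) ≤ (1 - (m - a) * s) ^ d :=
    one_add_mul_sub_le_pow (by nlinarith) d
  have hdc : 0 < d * (m - a) := mul_pos (Nat.cast_pos.2 hd) (sub_pos.2 ham)
  have hm : 0 < m := ha.trans_lt ham
  have := mul_le_mul_of_nonneg_left bernoulli hm.le
  have := mul_lt_mul_of_pos_left hms hdc
  linarith

lemma weighted_sum_numerators_lt (hd : 1 ≤ d) (ha : 0 ≤ a) (ham : a < m) (hB : m - a < B)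
    (hdB : d * (m - a) ≤ B) (hs : 0 < s) (hms : m * s < 1) :
    (d - 1) * ((1 - (m - a) * s) * (B + a * ((1 - (m - a) * s) ^ d - 1))) + 2 * ((1 - m * s) * B)
      < (d + 1) * (B + m * ((1 - (m - a) * s) ^ d - 1)) := by
  have hm : 0 < m := ha.trans_lt ham
  have hc : 0 < m - a := sub_pos.2 ham
  obtain ⟨t, ht⟩ : ∃ t, t = (m - a) * s := ⟨_, rfl⟩
  obtain ⟨w, hw⟩ : ∃ w, w = 1 - (1 - t) ^ d := ⟨_, rfl⟩
  have ht0 : 0 < t := ht ▸ mul_pos hc hs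
  have ht1 : t < 1 := by nlinarith
  have hw0 : 0 < w :=
    hw ▸ sub_pos.2 (pow_lt_one₀ (by linarith) (by linarith) (by lia))
  have bernoulli : w ≤ d * t := by
    linarith [one_add_mul_sub_le_pow (show -1 ≤ 1 - t by linarith) d]
  have sharp_bernoulli : 2 * w + (d - 1) * (t * w) ≤ 2 * (d * t) := by
    rw [hw]
    linarith [two_sub_add_one_mul_le_one_sub_pow_mul ht0.le ht1.le d]
  have hdt : d * t ≤ B * s := by
    rw [ht, ← mul_assoc]
    exact mul_le_mul_of_nonneg_right hdB hs.le
  -- The right side minus the left side, regrouped so that each bracket is a Bernoulli gap.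
  suffices 0 < m * (2 * (B * s) - (2 * w + (d - 1) * (t * w)))
      + (d - 1) * ((m - a) * (B * s - w + t * w)) by
    have hpow : (1 - t) ^ d = 1 - w := by rw [hw]; ring
    rw [← ht, hpow]
    linear_combination this - (d - 1) * B * ht
  rcases hd.eq_or_lt with rfl | hd1
  · have hwt : w = t := by rw [hw]; ring
    have : t < B * s := ht ▸ mul_lt_mul_of_pos_right hB hs
    rw [hwt, Nat.cast_one]
    linarith [mul_pos hm (sub_pos.2 this)]
  · have hd1 : (1 : ℝ) < d := mod_cast hd1
    have : 0 < B * s - w + t * w := by linarith [mul_pos ht0 hw0]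
    exact add_pos_of_nonneg_of_pos (mul_nonneg hm.le (by linarith))
      (mul_pos (sub_pos.2 hd1) (mul_pos hc this))

lemma add_mul_sub_one_pos (hB : 0 < B) (hm : 0 ≤ m) (hx : 1 ≤ x) : 0 < B + m * (x - 1) :=
  add_pos_of_pos_of_nonneg hB (mul_nonneg hm (sub_nonneg.2 hx))

lemma mobiusCoord_pos (hB : 0 < B) (hm : 0 ≤ m) (hx : 1 < x) : 0 < mobiusCoord B m x :=
  div_pos (sub_pos.2 hx) (add_mul_sub_one_pos hB hm hx.le)

lemma mul_mobiusCoord_lt_one (hB : 0 < B) (hX : 0 < B + m * (x - 1)) :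
    m * mobiusCoord B m x < 1 := by
  rw [mobiusCoord, mul_div_assoc', div_lt_one hX]
  linarith

lemma add_mul_mobiusPow_sub_one_pos (hd : 1 ≤ d) (ha : 0 ≤ a) (ham : a < m)
    (hdB : d * (m - a) ≤ B) (hx : 1 < x) :
    0 < B + m * (mobiusPow d B m a x - 1) := by
  have hm : 0 < m := ha.trans_lt ham
  have hB : 0 < B := (mul_pos (Nat.cast_pos.2 hd) (sub_pos.2 ham)).trans_le hdB
  have hX := add_mul_sub_one_pos hB hm.le hx.le
  rw [mobiusPow, mobiusRatio_eq_one_sub hX.ne']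
  exact add_mul_one_sub_pow_sub_one_pos hd ha ham hdB (mobiusCoord_pos hB hm.le hx).le
    (mul_mobiusCoord_lt_one hB hX)

lemma weighted_sum_mobiusRatio_lt (hd : 1 ≤ d) (ha : 0 ≤ a) (ham : a < m) (hB : m - a < B)
    (hdB : d * (m - a) ≤ B) (hx : 1 < x) :
    (d - 1) * (mobiusRatio B m a x * mobiusRatio B m a (mobiusPow d B m a x)) +
      2 * (mobiusRatio B m 0 x * mobiusRatio B m 0 (mobiusPow d B m a x)) < d + 1 := by
  have hm : 0 < m := ha.trans_lt ham
  have hB0 : 0 < B := (sub_pos.2 ham).trans hB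
  have hX := add_mul_sub_one_pos hB0 hm.le hx.le
  have hY := add_mul_mobiusPow_sub_one_pos hd ha ham hdB hx
  have numerators_lt := weighted_sum_numerators_lt hd ha ham hB hdB
    (mobiusCoord_pos hB0 hm.le hx) (mul_mobiusCoord_lt_one hB0 hX)
  have ratio_zero : mobiusRatio B m 0 x = 1 - m * mobiusCoord B m x := by
    rw [mobiusRatio_eq_one_sub hX.ne', sub_zero]
  rw [← ratio_zero, ← mobiusRatio_eq_one_sub hX.ne', ← mobiusPow, ← div_lt_iff₀ hY]
    at numerators_lt
  have ratio_pow (k : ℝ) : mobiusRatio B m k (mobiusPow d B m a x) =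
    (B + k * (mobiusPow d B m a x - 1)) / (B + m * (mobiusPow d B m a x - 1)) := rfl
  refine lt_of_eq_of_lt ?_ numerators_lt
  rw [ratio_pow a, ratio_pow 0]
  ring

lemma deriv_mobiusPow_comp_self_lt (hd : 1 ≤ d) (ha : 0 ≤ a) (ham : a < m) (hB : m - a < B)
    (hdB : d * (m - a) ≤ B) (hx : 1 < x) :
    deriv (mobiusPow d B m a ∘ mobiusPow d B m a) x < (d * (m - a) / B) ^ 2 := by
  have hm : 0 < m := ha.trans_lt ham
  have hc : 0 < m - a := sub_pos.2 ham
  have hB0 : 0 < B := hc.trans hB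
  have hX := add_mul_sub_one_pos hB0 hm.le hx.le
  have hY := add_mul_mobiusPow_sub_one_pos hd ha ham hdB hx
  have ratio_mul_nonneg {k : ℝ} (hk : 0 ≤ k) (hkm : k ≤ m) :
      0 ≤ mobiusRatio B m k x * mobiusRatio B m k (mobiusPow d B m a x) :=
    mul_nonneg (mobiusRatio_nonneg hB0.le hk hkm hX.le) (mobiusRatio_nonneg hB0.le hk hkm hY.le)
  rw [deriv_mobiusPow_comp_self hB0.ne' hX.ne' hY.ne']
  refine mul_lt_of_lt_one_right (by positivity) (pow_mul_pow_lt_one_of_weighted_sum_lt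
    (ratio_mul_nonneg ha ham.le) (ratio_mul_nonneg le_rfl hm.le) ?_)
  rw [Nat.cast_sub hd, Nat.cast_one, Nat.cast_two]
  linarith [weighted_sum_mobiusRatio_lt hd ha ham hB hdB hx]

end Mobius

theorem fmfm_deriv_eq_iff_general (d : ℕ) (q m : ℝ) (hd : 1 ≤ d)
    (p : ℝ) (hp1 : p < 1) (hm : 1 - p ≤ m) (hq : 2 * (1 - p) < q)
    (hpc : 1 - q / ((d : ℝ) + 1) ≤ p)
    (B : ℝ) (hB : B = p + q - 1)
    (fm : ℝ → ℝ)
    (hfm : ∀ x : ℝ, fm x = ((B + (m - 1 + p) * (x - 1)) / (B + m * (x - 1))) ^ d) :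
    ∀ x : ℝ, 1 ≤ x →
      (deriv (fm ∘ fm) x = ((d : ℝ) * (1 - p) / (p + q - 1)) ^ 2 ↔ x = 1) := by
  intro x hx
  obtain rfl : fm = mobiusPow d B m (m - 1 + p) := funext hfm
  have slope_gap : m - (m - 1 + p) = 1 - p := by ring
  have hdB : d * (1 - p) ≤ B := by
    have : 1 - p ≤ q / (d + 1) := by linarith
    rw [le_div_iff₀ (by positivity)] at this
    linarith
  rw [← hB, ← slope_gap]
  rcases hx.eq_or_lt with rfl | hx
  · exact iff_of_true (deriv_mobiusPow_comp_self_one (by linarith)) rfl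
  · refine iff_of_false (deriv_mobiusPow_comp_self_lt hd ?_ ?_ ?_ ?_ hx).ne hx.ne' <;> linarith

theorem fmfm_deriv_eq_iff (d q m : ℕ) (hd : 1 ≤ d) (hq : 2 ≤ q)
    (hm1 : 1 ≤ m) (hmq : m ≤ q - 1)
    (p : ℝ) (hp0 : 0 < p) (hp1 : p < 1) (hpc : 1 - (q : ℝ) / ((d : ℝ) + 1) ≤ p)
    (B : ℝ) (hB : B = p + (q : ℝ) - 1)
    (fm : ℝ → ℝ)
    (hfm : ∀ x : ℝ, fm x =
      ((B + ((m : ℝ) - 1 + p) * (x - 1)) / (B + (m : ℝ) * (x - 1))) ^ d) :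
    ∀ x : ℝ, 1 ≤ x →
      (deriv (fm ∘ fm) x = ((d : ℝ) * (1 - p) / (p + (q : ℝ) - 1)) ^ 2 ↔ x = 1) := by
  have hq' : (2 : ℝ) ≤ q := mod_cast hq
  have hm' : (1 : ℝ) ≤ m := mod_cast hm1
  exact fmfm_deriv_eq_iff_general d q m hd p hp1 (by linarith) (by linarith) hpc B hB fm hfm
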